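/- The relation on pairs of twin binary trees defined by J_0 ≤_B J_1 iff there exist permutations σ_0, σ_1 with P(σ_0) = J_0, P(σ_1) = J_1 and σ_0 ≤_P σ_1 is a partial order on the set of pairs of twin binary trees with n nodes, and this poset is a lattice. -/

import Mathlib

open scoped Classical

/-- Baxter adjacency relations on words over the alphabet of natural numbers. -/
def BaxterAdj (w w' : List ℕ) : Prop :=
  (∃ (a b c d : ℕ) (u v : List ℕ), a ≤ b ∧ b < c ∧ c ≤ d ∧
      w = c :: (u ++ a :: d :: (v ++ [b])) ∧ w' = c :: (u ++ d :: a :: (v ++ [b]))) ∨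
  (∃ (a b c d : ℕ) (u v : List ℕ), a < b ∧ b ≤ c ∧ c < d ∧
      w = b :: (u ++ d :: a :: (v ++ [c])) ∧ w' = b :: (u ++ a :: d :: (v ++ [c])))

/-- One rewriting step: an adjacency applied inside a word (congruence context). -/
def BaxterStep (w w' : List ℕ) : Prop :=
  ∃ (p s u v : List ℕ), BaxterAdj u v ∧ w = p ++ u ++ s ∧ w' = p ++ v ++ s

/-- The Baxter congruence: the equivalence generated by the Baxter steps. -/
def BaxterEquiv : List ℕ → List ℕ → Prop := Relation.EqvGen BaxterStep

/-- Sylvester adjacency: a c u b ≡ c a u b when a ≤ b < c. -/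
def SylvAdj (w w' : List ℕ) : Prop :=
  ∃ (a b c : ℕ) (u : List ℕ), a ≤ b ∧ b < c ∧
    w = a :: c :: (u ++ [b]) ∧ w' = c :: a :: (u ++ [b])

def SylvStep (w w' : List ℕ) : Prop :=
  ∃ (p s u v : List ℕ), SylvAdj u v ∧ w = p ++ u ++ s ∧ w' = p ++ v ++ s

def SylvEquiv : List ℕ → List ℕ → Prop := Relation.EqvGen SylvStep

/-- #-sylvester adjacency: b u a c ≡ b u c a when a < b ≤ c. -/
def SylvHAdj (w w' : List ℕ) : Prop :=
  ∃ (a b c : ℕ) (u : List ℕ), a < b ∧ b ≤ c ∧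
    w = b :: (u ++ [a, c]) ∧ w' = b :: (u ++ [c, a])

def SylvHStep (w w' : List ℕ) : Prop :=
  ∃ (p s u v : List ℕ), SylvHAdj u v ∧ w = p ++ u ++ s ∧ w' = p ++ v ++ s

def SylvHEquiv : List ℕ → List ℕ → Prop := Relation.EqvGen SylvHStep

/-- The standardized word of `u`: position `i` receives the rank of the letter `u i`
(ties broken from left to right), ranks starting at `1`. -/
def std (u : List ℕ) : List ℕ :=
  (List.range u.length).map fun i =>
    ((List.range u.length).filter fun j =>
      decide (u.getD j 0 < u.getD i 0 ∨ (u.getD j 0 = u.getD i 0 ∧ j < i))).length + 1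

/-- The maximal letter of a word. -/
def wordMax (u : List ℕ) : ℕ := u.foldr max 0

/-- The Schützenberger transformation: reverse and complement each letter w.r.t. max + 1. -/
def schutz (u : List ℕ) : List ℕ := u.reverse.map fun x => wordMax u + 1 - x

/-- Labeled binary trees. -/
inductive BT where
  | leaf : BT
  | node : BT → ℕ → BT → BT
deriving DecidableEq

/-- Leaf insertion into a left binary search tree. -/
def leafInsL : BT → ℕ → BT
  | .leaf, a => .node .leaf a .leaf
  | .node l b r, a => if a < b then .node (leafInsL l a) b r else .node l b (leafInsL r a)

/-- Leaf insertion into a right binary search tree. -/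
def leafInsR : BT → ℕ → BT
  | .leaf, a => .node .leaf a .leaf
  | .node l b r, a => if a ≤ b then .node (leafInsR l a) b r else .node l b (leafInsR r a)

/-- The lower restricted tree `T_{≤ a}` of a right binary search tree. -/
def splitLE : BT → ℕ → BT
  | .leaf, _ => .leaf
  | .node l b r, a => if b ≤ a then .node l b (splitLE r a) else splitLE l a

/-- The higher restricted tree `T_{> a}` of a right binary search tree. -/
def splitGT : BT → ℕ → BT
  | .leaf, _ => .leaf
  | .node l b r, a => if b ≤ a then splitGT r a else .node (splitGT l a) b r

/-- Root insertion into a right binary search tree. -/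
def rootIns (t : BT) (a : ℕ) : BT := .node (splitLE t a) a (splitGT t a)

/-- The left tree of the P-symbol: leaf insertions from left to right. -/
def insL (u : List ℕ) : BT := u.foldl leafInsL .leaf

/-- The right tree of the P-symbol: root insertions from left to right. -/
def insR (u : List ℕ) : BT := u.foldl rootIns .leaf

/-- The P-symbol of a word. -/
def Psymb (u : List ℕ) : BT × BT := (insL u, insR u)

/-- Unlabeled binary trees. -/
inductive UBT where
  | leaf : UBT
  | node : UBT → UBT → UBT
deriving DecidableEq

/-- The shape of a labeled binary tree. -/
def shape : BT → UBT
  | .leaf => .leaf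
  | .node l _ r => .node (shape l) (shape r)

/-- The shape of the P-symbol of a word. -/
def Pshape (u : List ℕ) : UBT × UBT := (shape (insL u), shape (insR u))

/-- Number of internal nodes. -/
def sizeU : UBT → ℕ
  | .leaf => 0
  | .node l r => sizeU l + sizeU r + 1

/-- Orientations of the leaves, from left to right: `true` means right-oriented
(the leaf is the right child of its parent); the parameter is the orientation
assigned if the tree is reduced to a leaf. -/
def loU : UBT → Bool → List Bool
  | .leaf, b => [b]
  | .node l r, _ => loU l false ++ loU r true

/-- Leaf orientations of a labeled binary tree. -/
def loB : BT → Bool → List Bool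
  | .leaf, b => [b]
  | .node l _ r, _ => loB l false ++ loB r true

/-- The canopy: orientations of the leaves except the first and the last one. -/
def canU (t : UBT) : List Bool := ((loU t false).drop 1).dropLast

/-- A pair of twin binary trees: same number of nodes and complementary canopies. -/
def IsTwin (J : UBT × UBT) : Prop :=
  sizeU J.1 = sizeU J.2 ∧ (canU J.1).length = (canU J.2).length ∧
    ∀ i < (canU J.1).length, (canU J.1).getD i false ≠ (canU J.2).getD i false

/-- `σ` is (the word of) a permutation of `{1, …, n}`. -/
def IsPerm (n : ℕ) (σ : List ℕ) : Prop := σ.Perm (List.range' 1 n)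

/-- Covering-type step of the right permutohedron (weak) order: exchange of two
adjacent letters `a < b`. -/
def PermutoStep (σ ν : List ℕ) : Prop :=
  ∃ (p s : List ℕ) (a b : ℕ), a < b ∧ σ = p ++ a :: b :: s ∧ ν = p ++ b :: a :: s

/-- The right permutohedron (weak) order. -/
def PermutoLe : List ℕ → List ℕ → Prop := Relation.ReflTransGen PermutoStep

/-- Baxter permutations: avoiding the generalized patterns 2-41-3 and 3-14-2. -/
def IsBaxterPerm (σ : List ℕ) : Prop :=
  ∀ i j k, i < j → j + 1 < k → k < σ.length →
    ¬(σ.getD (j+1) 0 < σ.getD i 0 ∧ σ.getD i 0 < σ.getD k 0 ∧ σ.getD k 0 < σ.getD j 0) ∧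
    ¬(σ.getD j 0 < σ.getD k 0 ∧ σ.getD k 0 < σ.getD i 0 ∧ σ.getD i 0 < σ.getD (j+1) 0)

/-- The Baxter order on pairs of twin binary trees, induced by the
permutohedron order via the insertion algorithm. -/
def leB (J0 J1 : UBT × UBT) : Prop :=
  ∃ (n : ℕ) (σ0 σ1 : List ℕ), IsPerm n σ0 ∧ IsPerm n σ1 ∧
    Pshape σ0 = J0 ∧ Pshape σ1 = J1 ∧ PermutoLe σ0 σ1

/-!
Label the nodes of a binary tree in inorder. In a pair of twin binary trees, the left tree is
determined by the relation `L a b` saying that `a < b` and `a` lies below `b`, the right tree by the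
relation `R a b` saying that `a < b` and `b` lies below `a`. For the P-symbol of a permutation with
inversion relation `I`, one has, for `a < b`, `L a b` iff `I j b` for all `a ≤ j < b`, and `R a b`
iff `I a j` for all `a < j ≤ b`; in particular `L` and `R` grow with `I`. Complementarity of the
canopies says that `L` and `R` agree on consecutive labels, and because of this the transitive
closure of `L ∪ R` is an inversion relation which gives back `L` and `R`. Hence `≤_B` is the
inclusion order on the pairs `(L, R)`. The axioms characterizing these pairs are stable under
intersection, so all infima exist.
-/

/-! ### Descendant relations of binary trees -/

namespace UBT

/-- `t.IsAncestor s a b`: the node `b` lies in the subtree of `t` rooted at `a` (possibly `a = b`),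
where the nodes of `t` are labeled `s, s + 1, …` in inorder. -/
def IsAncestor : UBT → ℕ → ℕ → ℕ → Prop
  | leaf, _, _, _ => False
  | node l r, s, a, b => (a = s + sizeU l ∧ s ≤ b ∧ b < s + sizeU (node l r)) ∨
      l.IsAncestor s a b ∨ r.IsAncestor (s + sizeU l + 1) a b

/-- `t.LeftDesc s a b`: the node `a` lies in the left subtree of `b`, in the inorder labeling
starting at `s`. -/
def LeftDesc (t : UBT) (s a b : ℕ) : Prop := a < b ∧ t.IsAncestor s b a

/-- `t.RightDesc s a b`: the node `b` lies in the right subtree of `a`, in the inorder labeling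
starting at `s`. -/
def RightDesc (t : UBT) (s a b : ℕ) : Prop := a < b ∧ t.IsAncestor s a b

variable {t t' : UBT} {s a b c : ℕ}

theorem IsAncestor.bounds (h : t.IsAncestor s a b) :
    (s ≤ a ∧ a < s + sizeU t) ∧ s ≤ b ∧ b < s + sizeU t := by
  induction t generalizing s with
  | leaf => exact h.elim
  | node l r ihl ihr => grind [IsAncestor, sizeU]

theorem isAncestor_left_iff {l : UBT} (r : UBT) :
    l.IsAncestor s a b ↔ (node l r).IsAncestor s a b ∧ a < s + sizeU l := by
  grind [IsAncestor, → IsAncestor.bounds]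

theorem isAncestor_right_iff (l : UBT) {r : UBT} :
    r.IsAncestor (s + sizeU l + 1) a b ↔ (node l r).IsAncestor s a b ∧ s + sizeU l < a := by
  grind [IsAncestor, → IsAncestor.bounds]

theorem IsAncestor.trans (hab : t.IsAncestor s a b) (hbc : t.IsAncestor s b c) :
    t.IsAncestor s a c := by
  induction t generalizing s with
  | leaf => exact hab.elim
  | node l r ihl ihr => grind [IsAncestor, sizeU, → IsAncestor.bounds]

theorem IsAncestor.antisymm (hab : t.IsAncestor s a b) (hba : t.IsAncestor s b a) : a = b := by
  induction t generalizing s with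
  | leaf => exact hab.elim
  | node l r ihl ihr => grind [IsAncestor, sizeU, → IsAncestor.bounds]

theorem IsAncestor.of_mem_uIcc (h : t.IsAncestor s a b) (hc : c ∈ Set.uIcc a b) :
    t.IsAncestor s a c := by
  rw [Set.mem_uIcc] at hc
  induction t generalizing s with
  | leaf => exact h.elim
  | node l r ihl ihr => grind [IsAncestor, sizeU, → IsAncestor.bounds]

theorem exists_common_ancestor (ha : s ≤ a) (hab : a ≤ b) (hb : b < s + sizeU t) :
    ∃ c ∈ Set.Icc a b, t.IsAncestor s c a ∧ t.IsAncestor s c b := by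
  simp only [Set.mem_Icc]
  induction t generalizing s with
  | leaf => simp only [sizeU] at hb; omega
  | node l r ihl ihr =>
    rcases lt_or_ge b (s + sizeU l) with hbl | hbl
    · obtain ⟨c, hc, hca, hcb⟩ := ihl ha hbl
      exact ⟨c, hc, .inr (.inl hca), .inr (.inl hcb)⟩
    rcases lt_or_ge (s + sizeU l) a with har | har
    · obtain ⟨c, hc, hca, hcb⟩ := ihr (s := s + sizeU l + 1) har (by grind [sizeU])
      exact ⟨c, hc, .inr (.inr hca), .inr (.inr hcb)⟩
    · exact ⟨s + sizeU l, ⟨har, hbl⟩, .inl ⟨rfl, by omega⟩, .inl ⟨rfl, by omega⟩⟩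

theorem isAncestor_self (ha : s ≤ a) (ha' : a < s + sizeU t) : t.IsAncestor s a a := by
  obtain ⟨c, hc, hca, -⟩ := exists_common_ancestor ha le_rfl ha'
  rwa [Set.Icc_self, Set.mem_singleton_iff.1 hc] at *

theorem isAncestor_iff : t.IsAncestor s a b ↔
    (a = b ∧ s ≤ a ∧ a < s + sizeU t) ∨ t.LeftDesc s b a ∨ t.RightDesc s a b := by
  grind [LeftDesc, RightDesc, isAncestor_self, → IsAncestor.bounds]

theorem eq_of_isAncestor_iff (hsize : sizeU t = sizeU t')
    (h : ∀ a b, t.IsAncestor s a b ↔ t'.IsAncestor s a b) : t = t' := by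
  induction t generalizing t' s with
  | leaf => cases t' <;> grind [sizeU]
  | node l r ihl ihr =>
    cases t' with
    | leaf => grind [sizeU]
    | node l' r' =>
      -- the root is the only node that is an ancestor of all nodes
      have hroot : s + sizeU l = s + sizeU l' := by
        refine IsAncestor.antisymm (t := node l r) (s := s) ?_ ((h _ _).2 ?_) <;>
          grind [IsAncestor, sizeU]
      have hl : l = l' := ihl (by omega) (s := s) fun a b => by
        rw [isAncestor_left_iff r, h, hroot, ← isAncestor_left_iff r']
      have hr : r = r' := ihr (by grind [sizeU]) (s := s + sizeU l + 1) fun a b => by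
        rw [isAncestor_right_iff l, h, hroot, ← isAncestor_right_iff l']
      rw [hl, hr]

theorem rightDesc_iff_forall_not_leftDesc : t.RightDesc s a b ↔
    (s ≤ a ∧ a < b ∧ b < s + sizeU t) ∧ ∀ c ∈ Set.Ioc a b, ¬ t.LeftDesc s a c := by
  constructor
  · rintro ⟨hab, h⟩
    refine ⟨⟨h.bounds.1.1, hab, h.bounds.2.2⟩, fun c hc hac => hac.1.ne ?_⟩
    exact (h.of_mem_uIcc (Set.mem_uIcc_of_le hc.1.le hc.2)).antisymm hac.2
  · rintro ⟨⟨ha, hab, hb⟩, h⟩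
    obtain ⟨c, hc, hca, hcb⟩ := exists_common_ancestor ha hab.le hb
    obtain rfl | hac := hc.1.eq_or_lt
    · exact ⟨hab, hcb⟩
    · exact absurd ⟨hac, hca⟩ (h c ⟨hac, hc.2⟩)

theorem leftDesc_iff_forall_not_rightDesc : t.LeftDesc s a b ↔
    (s ≤ a ∧ a < b ∧ b < s + sizeU t) ∧ ∀ c ∈ Set.Ico a b, ¬ t.RightDesc s c b := by
  constructor
  · rintro ⟨hab, h⟩
    refine ⟨⟨h.bounds.2.1, hab, h.bounds.1.2⟩, fun c hc hcb => hcb.1.ne ?_⟩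
    exact hcb.2.antisymm (h.of_mem_uIcc (Set.mem_uIcc_of_ge hc.1 hc.2.le))
  · rintro ⟨⟨ha, hab, hb⟩, h⟩
    obtain ⟨c, hc, hca, hcb⟩ := exists_common_ancestor ha hab.le hb
    obtain rfl | hlt := hc.2.eq_or_lt
    · exact ⟨hab, hca⟩
    · exact absurd ⟨hlt, hcb⟩ (h c ⟨hc.1, hlt⟩)

theorem eq_of_leftDesc_eq (hsize : sizeU t = sizeU t') (h : t.LeftDesc s = t'.LeftDesc s) :
    t = t' :=
  eq_of_isAncestor_iff (s := s) hsize fun a b => by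
    simp only [isAncestor_iff, rightDesc_iff_forall_not_leftDesc, h, hsize]

theorem eq_of_rightDesc_eq (hsize : sizeU t = sizeU t') (h : t.RightDesc s = t'.RightDesc s) :
    t = t' :=
  eq_of_isAncestor_iff (s := s) hsize fun a b => by
    simp only [isAncestor_iff, leftDesc_iff_forall_not_rightDesc, h, hsize]

theorem rightDesc_succ_iff_not_leftDesc (ha : s ≤ a) (ha' : a + 1 < s + sizeU t) :
    t.RightDesc s a (a + 1) ↔ ¬ t.LeftDesc s a (a + 1) := by
  grind [rightDesc_iff_forall_not_leftDesc]

theorem LeftDesc.of_mem_Ico (h : t.LeftDesc s a b) (hc : c ∈ Set.Ico a b) : t.LeftDesc s c b :=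
  ⟨hc.2, h.2.of_mem_uIcc (Set.mem_uIcc_of_ge hc.1 hc.2.le)⟩

theorem RightDesc.of_mem_Ioc (h : t.RightDesc s a b) (hc : c ∈ Set.Ioc a b) :
    t.RightDesc s a c :=
  ⟨hc.1, h.2.of_mem_uIcc (Set.mem_uIcc_of_le hc.1.le hc.2)⟩

theorem LeftDesc.trans (hab : t.LeftDesc s a b) (hbc : t.LeftDesc s b c) : t.LeftDesc s a c :=
  ⟨hab.1.trans hbc.1, hbc.2.trans hab.2⟩

theorem RightDesc.trans (hab : t.RightDesc s a b) (hbc : t.RightDesc s b c) :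
    t.RightDesc s a c :=
  ⟨hab.1.trans hbc.1, hab.2.trans hbc.2⟩

end UBT

/-! ### Canopies -/

namespace UBT

variable {t : UBT}

theorem loU_getElem?_zero (ht : 0 < sizeU t) (b : Bool) : (loU t b)[0]? = some false := by
  induction t generalizing b with
  | leaf => simp [sizeU] at ht
  | node l r ihl _ =>
    cases l with
    | leaf => simp [loU]
    | node l₁ l₂ =>
      have := ihl (by simp [sizeU]) false
      grind [loU]

theorem length_loU (t : UBT) (b : Bool) : (loU t b).length = sizeU t + 1 := by
  induction t generalizing b with
  | leaf => rfl
  | node l r ihl ihr => grind [loU, sizeU]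

theorem loU_getElem?_sizeU (ht : 0 < sizeU t) (b : Bool) :
    (loU t b)[sizeU t]? = some true := by
  induction t generalizing b with
  | leaf => simp [sizeU] at ht
  | node l r _ ihr =>
    cases r with
    | leaf => grind [loU, sizeU, length_loU]
    | node r₁ r₂ =>
      have := ihr (by simp [sizeU]) true
      grind [loU, sizeU, length_loU]

theorem loU_getElem?_succ {i : ℕ} (hi : i + 1 < sizeU t) (b : Bool) (s : ℕ) :
    (loU t b)[i + 1]? = some (decide (t.LeftDesc s (s + i) (s + i + 1))) := by
  induction t generalizing b s i with
  | leaf => simp [sizeU] at hi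
  | node l r ihl ihr =>
    have hlen := length_loU l false
    obtain hlt | heq | rfl | ⟨k, rfl⟩ : i + 1 < sizeU l ∨ i + 1 = sizeU l ∨ i = sizeU l ∨
        ∃ k, i = sizeU l + 1 + k := by
      rcases lt_trichotomy i (sizeU l) with h | h | h
      · omega
      · exact .inr (.inr (.inl h))
      · exact .inr (.inr (.inr ⟨i - sizeU l - 1, by omega⟩))
    · have hdesc : (node l r).LeftDesc s (s + i) (s + i + 1) ↔
          l.LeftDesc s (s + i) (s + i + 1) := by
        grind [LeftDesc, IsAncestor, → IsAncestor.bounds]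
      rw [loU, List.getElem?_append_left (by omega), ihl hlt false s]
      simp only [hdesc]
    · have hdesc : (node l r).LeftDesc s (s + i) (s + i + 1) :=
        ⟨by omega, .inl ⟨by omega, by omega, by omega⟩⟩
      rw [loU, List.getElem?_append_left (by omega), heq, loU_getElem?_sizeU (by omega)]
      simp only [hdesc, decide_true]
    · have hdesc : ¬ (node l r).LeftDesc s (s + sizeU l) (s + sizeU l + 1) := by
        grind [LeftDesc, IsAncestor, → IsAncestor.bounds]
      rw [loU, List.getElem?_append_right (by omega), hlen, Nat.sub_self,
        loU_getElem?_zero (by grind [sizeU])]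
      simp only [hdesc, decide_false]
    · have hdesc : (node l r).LeftDesc s (s + (sizeU l + 1 + k)) (s + (sizeU l + 1 + k) + 1) ↔
          r.LeftDesc (s + sizeU l + 1) (s + sizeU l + 1 + k) (s + sizeU l + 1 + k + 1) := by
        grind [LeftDesc, IsAncestor, → IsAncestor.bounds]
      rw [loU, List.getElem?_append_right (by omega), hlen,
        show sizeU l + 1 + k + 1 - (sizeU l + 1) = k + 1 by omega,
        ihr (by grind [sizeU]) true (s + sizeU l + 1)]
      simp only [hdesc]

theorem length_canU (t : UBT) : (canU t).length = sizeU t - 1 := by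
  simp [canU, length_loU]

theorem canU_getD {i : ℕ} (hi : i + 1 < sizeU t) (s : ℕ) :
    (canU t).getD i false = decide (t.LeftDesc s (s + i) (s + i + 1)) := by
  have hlen := length_loU t false
  have hget : (canU t)[i]? = (loU t false)[i + 1]? := by
    grind [canU]
  rw [List.getD_eq_getElem?_getD, hget, loU_getElem?_succ hi false s, Option.getD_some]

end UBT

theorem isTwin_iff_leftDesc_iff_rightDesc {J : UBT × UBT} : IsTwin J ↔ sizeU J.1 = sizeU J.2 ∧
    ∀ i, J.1.LeftDesc 1 i (i + 1) ↔ J.2.RightDesc 1 i (i + 1) := by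
  rw [IsTwin, and_congr_right_iff]
  intro hsize
  have hcan (k : ℕ) (hk : k + 1 < sizeU J.1) :
      (canU J.1).getD k false ≠ (canU J.2).getD k false ↔
        (J.1.LeftDesc 1 (1 + k) (1 + k + 1) ↔ J.2.RightDesc 1 (1 + k) (1 + k + 1)) := by
    rw [UBT.canU_getD hk 1, UBT.canU_getD (hsize ▸ hk) 1,
      UBT.rightDesc_succ_iff_not_leftDesc (by omega) (by omega)]
    grind
  simp only [UBT.length_canU, hsize, true_and]
  constructor
  · intro h i
    by_cases hi : 1 ≤ i ∧ i < sizeU J.1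
    · obtain ⟨k, rfl⟩ := Nat.exists_eq_add_of_le hi.1
      exact (hcan k (by omega)).1 (h k (by omega))
    · grind [UBT.LeftDesc, UBT.RightDesc, → UBT.IsAncestor.bounds]
  · exact fun h k hk => (hcan k (by omega)).2 (h (1 + k))

/-! ### Inversions and kernels -/

section Sublist

variable {α : Type*} {x y a : α} {l l₁ l₂ : List α}

theorem pair_sublist_cons_iff : [x, y].Sublist (a :: l) ↔ (x = a ∧ y ∈ l) ∨ [x, y].Sublist l := by
  rw [List.sublist_cons_iff]
  grind

theorem pair_sublist_append_iff : [x, y].Sublist (l₁ ++ l₂) ↔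
    [x, y].Sublist l₁ ∨ [x, y].Sublist l₂ ∨ (x ∈ l₁ ∧ y ∈ l₂) := by
  induction l₁ with
  | nil => simp
  | cons a l₁ ih => grind [pair_sublist_cons_iff]

theorem mem_of_pair_sublist (h : [x, y].Sublist l) : x ∈ l ∧ y ∈ l :=
  ⟨h.subset (by simp), h.subset (by simp)⟩

theorem pair_sublist_reverse_iff : [x, y].Sublist l.reverse ↔ [y, x].Sublist l := by
  rw [← List.reverse_sublist, List.reverse_reverse]
  rfl

theorem pair_sublist_filter_iff {p : α → Bool} :
    [x, y].Sublist (l.filter p) ↔ [x, y].Sublist l ∧ p x ∧ p y := by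
  refine ⟨fun h => ⟨h.trans List.filter_sublist, ?_⟩, fun ⟨h, hx, hy⟩ => ?_⟩
  · obtain ⟨hx, hy⟩ := mem_of_pair_sublist h
    exact ⟨(List.mem_filter.1 hx).2, (List.mem_filter.1 hy).2⟩
  · simpa [hx, hy] using h.filter p

theorem pivot_induction [LinearOrder α] {motive : List α → Prop} (nil : motive [])
    (cons : ∀ a l, motive (l.filter (· < a)) → motive (l.filter (a ≤ ·)) → motive (a :: l))
    (l : List α) : motive l := by
  induction h : l.length using Nat.strong_induction_on generalizing l with
  | _ n ih =>
    cases l with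
    | nil => exact nil
    | cons a l =>
      have hlt (p : α → Bool) : (l.filter p).length < n := by
        grind [List.length_filter_le]
      exact cons a l (ih _ (hlt _) _ rfl) (ih _ (hlt _) _ rfl)

end Sublist

section Kernel

variable {α : Type*} [Preorder α] {I I' : α → α → Prop}

/-- `IsInversion σ a b`: the smaller value `a` occurs after the larger value `b` in `σ`. -/
def IsInversion (σ : List α) (a b : α) : Prop := a < b ∧ [b, a].Sublist σ

/-- The left kernel of a relation `I`: for the inversion relation `I` of a permutation, this is
the left descendant relation of the left tree of its P-symbol. -/
def leftKernel (I : α → α → Prop) (a b : α) : Prop := a < b ∧ ∀ j ∈ Set.Ico a b, I j b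

/-- The right kernel of a relation `I`: for the inversion relation `I` of a permutation, this is
the right descendant relation of the right tree of its P-symbol. -/
def rightKernel (I : α → α → Prop) (a b : α) : Prop := a < b ∧ ∀ j ∈ Set.Ioc a b, I a j

theorem leftKernel_mono (h : I ≤ I') : leftKernel I ≤ leftKernel I' :=
  fun _ _ hab => ⟨hab.1, fun j hj => h _ _ (hab.2 j hj)⟩

theorem rightKernel_mono (h : I ≤ I') : rightKernel I ≤ rightKernel I' :=
  fun _ _ hab => ⟨hab.1, fun j hj => h _ _ (hab.2 j hj)⟩

end Kernel

/-! ### The shape of the P-symbol -/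

/-- `IsFirstBetween σ b a`: the letter `b` precedes in `σ` all other values of the interval
with end points `a` and `b`. -/
def IsFirstBetween (σ : List ℕ) (b a : ℕ) : Prop :=
  a ∈ σ ∧ b ∈ σ ∧ ∀ j ∈ Set.uIcc a b, j ≠ b → [b, j].Sublist σ

theorem insL_cons (a : ℕ) (σ : List ℕ) :
    insL (a :: σ) = .node (insL (σ.filter (· < a))) a (insL (σ.filter (a ≤ ·))) := by
  have hfoldl (l r : BT) : σ.foldl leafInsL (.node l a r) =
      .node ((σ.filter (· < a)).foldl leafInsL l) a ((σ.filter (a ≤ ·)).foldl leafInsL r) := by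
    induction σ generalizing l r with
    | nil => rfl
    | cons x σ ih => by_cases h : x < a <;> simp [leafInsL, h, ih, not_lt.1]
  exact hfoldl .leaf .leaf

theorem splitLE_insL (τ : List ℕ) (a : ℕ) : splitLE (insL τ) a = insL (τ.filter (· ≤ a)) := by
  induction τ using pivot_induction with
  | nil => rfl
  | cons c τ ihlt ihge =>
    rw [insL_cons, splitLE]
    split_ifs with hca
    · rw [ihge, List.filter_cons_of_pos (by simpa using hca), insL_cons, List.filter_filter,
        List.filter_filter, List.filter_filter]
      congr 3 <;> grind
    · rw [ihlt, List.filter_cons_of_neg (by simpa using hca), List.filter_filter]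
      congr 2; grind

theorem splitGT_insL (τ : List ℕ) (a : ℕ) : splitGT (insL τ) a = insL (τ.filter (a < ·)) := by
  induction τ using pivot_induction with
  | nil => rfl
  | cons c τ ihlt ihge =>
    rw [insL_cons, splitGT]
    split_ifs with hca
    · rw [ihge, List.filter_cons_of_neg (by simpa using hca), List.filter_filter]
      congr 2; grind
    · rw [ihlt, List.filter_cons_of_pos (by simpa using hca), insL_cons, List.filter_filter,
        List.filter_filter, List.filter_filter]
      congr 3 <;> grind

theorem rootIns_insL {τ : List ℕ} {a : ℕ} (ha : a ∉ τ) : rootIns (insL τ) a = insL (a :: τ) := by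
  rw [rootIns, splitLE_insL, splitGT_insL, insL_cons]
  have hlt : τ.filter (· ≤ a) = τ.filter (· < a) := List.filter_congr fun x hx => by grind
  have hgt : τ.filter (a < ·) = τ.filter (a ≤ ·) := List.filter_congr fun x hx => by grind
  rw [hlt, hgt]

theorem insR_eq_insL_reverse {σ : List ℕ} (hσ : σ.Nodup) : insR σ = insL σ.reverse := by
  induction σ using List.reverseRecOn with
  | nil => rfl
  | append_singleton σ a ih =>
    obtain ⟨hσ', -, ha⟩ := List.nodup_append.1 hσ
    have haσ : a ∉ σ.reverse := by grind
    rw [List.reverse_append, List.reverse_singleton, List.singleton_append, ← rootIns_insL haσ,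
      ← ih hσ', insR, insR, List.foldl_append, List.foldl_cons, List.foldl_nil]

theorem sizeU_shape_insL (σ : List ℕ) : sizeU (shape (insL σ)) = σ.length := by
  induction σ using pivot_induction with
  | nil => rfl
  | cons a σ ihlt ihge =>
    have hlen := List.length_eq_length_filter_add (l := σ) (· < a)
    simp only [← decide_not, not_lt] at hlen
    simp only [insL_cons, shape, sizeU, ihlt, ihge, List.length_cons, hlen]

theorem sizeU_shape_insR {σ : List ℕ} (hσ : σ.Nodup) : sizeU (shape (insR σ)) = σ.length := by
  rw [insR_eq_insL_reverse hσ, sizeU_shape_insL, List.length_reverse]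

theorem isFirstBetween_cons_self {σ : List ℕ} {c a s n : ℕ}
    (hσ : (c :: σ).Perm (List.range' s n)) :
    IsFirstBetween (c :: σ) c a ↔ s ≤ a ∧ a < s + n := by
  have hmem (j : ℕ) : j ∈ c :: σ ↔ s ≤ j ∧ j < s + n := by
    rw [hσ.mem_iff, List.mem_range'_1]
  have hc := (hmem c).1 List.mem_cons_self
  rw [IsFirstBetween, hmem, hmem]
  refine ⟨fun h => h.1, fun ha => ⟨ha, hc, fun j hj hjc => ?_⟩⟩
  have hjσ : j ∈ c :: σ := (hmem j).2 (by grind [Set.mem_uIcc])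
  exact pair_sublist_cons_iff.2 (.inl ⟨rfl, (List.mem_cons.1 hjσ).resolve_left hjc⟩)

theorem isFirstBetween_cons_iff {σ : List ℕ} {p : ℕ → Bool} {a b c : ℕ} (hσ : (c :: σ).Nodup)
    (hbc : b ≠ c) (hp : ∀ x ≠ c, p x ↔ (x < c ↔ b < c)) :
    IsFirstBetween (c :: σ) b a ↔ IsFirstBetween (σ.filter p) b a := by
  have hcσ : c ∉ σ := (List.nodup_cons.1 hσ).1
  constructor
  · rintro ⟨ha, hb, h⟩
    have hcb : c ∉ Set.uIcc a b := fun hc => by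
      have hlt := h c hc hbc.symm
      exact hcσ (mem_of_pair_sublist ((pair_sublist_cons_iff.1 hlt).resolve_left (by tauto))).2
    have hside (j : ℕ) (hj : j ∈ Set.uIcc a b) : p j ∧ j ≠ c := by
      grind [Set.mem_uIcc]
    refine ⟨?_, ?_, fun j hj hjb => ?_⟩
    · grind [Set.left_mem_uIcc]
    · grind
    · rw [pair_sublist_filter_iff]
      exact ⟨(pair_sublist_cons_iff.1 (h j hj hjb)).resolve_left (by tauto), by grind⟩
  · rintro ⟨ha, hb, h⟩
    refine ⟨?_, ?_, fun j hj hjb => ?_⟩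
    · exact List.mem_cons_of_mem _ (List.mem_of_mem_filter ha)
    · exact List.mem_cons_of_mem _ (List.mem_of_mem_filter hb)
    · exact ((pair_sublist_filter_iff.1 (h j hj hjb)).1).cons c

theorem perm_range'_filter {c s n : ℕ} {σ : List ℕ} (hσ : (c :: σ).Perm (List.range' s n)) :
    (σ.filter (· < c)).Perm (List.range' s (c - s)) ∧
      (σ.filter (c ≤ ·)).Perm (List.range' (c + 1) (s + n - (c + 1))) := by
  have hnodup := hσ.nodup_iff.2 List.nodup_range'
  have hmem (x : ℕ) : x ∈ c :: σ ↔ s ≤ x ∧ x < s + n := by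
    rw [hσ.mem_iff, List.mem_range'_1]
  obtain ⟨hcσ, hσ'⟩ := List.nodup_cons.1 hnodup
  have hc := (hmem c).1 List.mem_cons_self
  simp only [List.mem_cons] at hmem
  constructor <;>
  · rw [List.perm_ext_iff_of_nodup (hσ'.filter _) List.nodup_range']
    intro x
    have hx : x ∈ σ ↔ x ≠ c ∧ s ≤ x ∧ x < s + n := by grind
    simp only [List.mem_range'_1, List.mem_filter, hx, decide_eq_true_eq]
    omega

theorem isAncestor_shape_insL {σ : List ℕ} {s n : ℕ} (hσ : σ.Perm (List.range' s n)) (a b : ℕ) :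
    (shape (insL σ)).IsAncestor s b a ↔ IsFirstBetween σ b a := by
  induction σ using pivot_induction generalizing s n with
  | nil => simp [insL, shape, UBT.IsAncestor, IsFirstBetween]
  | cons c σ ihlt ihge =>
    obtain ⟨hlt, hge⟩ := perm_range'_filter hσ
    have hc : s ≤ c ∧ c < s + n := by
      rw [← List.mem_range'_1, ← hσ.mem_iff]; exact List.mem_cons_self
    have hroot : s + sizeU (shape (insL (σ.filter (· < c)))) = c := by
      rw [sizeU_shape_insL, hlt.length_eq, List.length_range']; omega
    have hnodup := hσ.nodup_iff.2 List.nodup_range'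
    have hsize : sizeU (shape (insL (c :: σ))) = n := by
      rw [sizeU_shape_insL, hσ.length_eq, List.length_range']
    rw [insL_cons, shape] at hsize ⊢
    set l := shape (insL (σ.filter (· < c)))
    set r := shape (insL (σ.filter (c ≤ ·)))
    rcases lt_trichotomy b c with hbc | rfl | hbc
    · rw [isFirstBetween_cons_iff (p := (· < c)) hnodup hbc.ne (by grind), ← ihlt hlt,
        UBT.isAncestor_left_iff (l := l) r, hroot, and_iff_left hbc]
    · rw [isFirstBetween_cons_self hσ]
      exact ⟨fun h => hsize ▸ h.bounds.2, fun h => .inl ⟨hroot.symm, by rwa [hsize]⟩⟩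
    · have hright := UBT.isAncestor_right_iff (s := s) (a := b) (b := a) l (r := r)
      rw [hroot, and_iff_left hbc] at hright
      rw [isFirstBetween_cons_iff (p := (c ≤ ·)) hnodup hbc.ne' (by grind), ← ihge hge, hright]

theorem leftDesc_shape_insL {σ : List ℕ} {s n : ℕ} (hσ : σ.Perm (List.range' s n)) :
    (shape (insL σ)).LeftDesc s = leftKernel (IsInversion σ) := by
  ext a b
  rw [UBT.LeftDesc, isAncestor_shape_insL hσ, leftKernel, and_congr_right_iff]
  intro hab
  rw [IsFirstBetween, Set.uIcc_of_lt hab]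
  constructor
  · exact fun h j hj => ⟨hj.2, h.2.2 j ⟨hj.1, hj.2.le⟩ hj.2.ne⟩
  · intro h
    have hmem := mem_of_pair_sublist (h a ⟨le_rfl, hab⟩).2
    exact ⟨hmem.2, hmem.1, fun j hj hjb => (h j ⟨hj.1, hj.2.lt_of_ne hjb⟩).2⟩

theorem rightDesc_shape_insR {σ : List ℕ} {s n : ℕ} (hσ : σ.Perm (List.range' s n)) :
    (shape (insR σ)).RightDesc s = rightKernel (IsInversion σ) := by
  ext a b
  have hrev : σ.reverse.Perm (List.range' s n) := σ.reverse_perm.trans hσ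
  rw [UBT.RightDesc, insR_eq_insL_reverse (hσ.nodup_iff.2 List.nodup_range'),
    isAncestor_shape_insL hrev, rightKernel, and_congr_right_iff]
  intro hab
  simp only [IsFirstBetween, Set.uIcc_of_gt hab, pair_sublist_reverse_iff, List.mem_reverse]
  constructor
  · exact fun h j hj => ⟨hj.1, h.2.2 j ⟨hj.1.le, hj.2⟩ hj.1.ne'⟩
  · intro h
    have hmem := mem_of_pair_sublist (h b ⟨hab, le_rfl⟩).2
    exact ⟨hmem.1, hmem.2, fun j hj hja => (h j ⟨hj.1.lt_of_ne' hja, hj.2⟩).2⟩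

/-! ### The permutohedron order -/

section Permutohedron

variable {σ ν : List ℕ}

theorem PermutoStep.isInversion_le (h : PermutoStep σ ν) : IsInversion σ ≤ IsInversion ν := by
  obtain ⟨p, s, c, d, hcd, rfl, rfl⟩ := h
  rintro a b ⟨hab, hba⟩
  refine ⟨hab, ?_⟩
  simp only [pair_sublist_append_iff, pair_sublist_cons_iff, List.mem_cons] at hba ⊢
  grind

theorem PermutoLe.isInversion_le (h : PermutoLe σ ν) : IsInversion σ ≤ IsInversion ν := by
  induction h with
  | refl => exact le_rfl
  | tail _ hstep ih => exact ih.trans hstep.isInversion_le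

theorem PermutoLe.cons (a : ℕ) (h : PermutoLe σ ν) : PermutoLe (a :: σ) (a :: ν) := by
  refine Relation.ReflTransGen.lift (a :: ·) ?_ _ _ h
  rintro _ _ ⟨p, s, c, d, hcd, rfl, rfl⟩
  exact ⟨a :: p, s, c, d, hcd, rfl, rfl⟩

theorem permutoLe_middle {p : List ℕ} {b : ℕ} (q : List ℕ) (h : ∀ x ∈ p, x < b) :
    PermutoLe (p ++ b :: q) (b :: (p ++ q)) := by
  induction p with
  | nil => exact .refl
  | cons x p ih =>
    have hx : PermutoStep (x :: b :: (p ++ q)) (b :: x :: (p ++ q)) :=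
      ⟨[], p ++ q, x, b, h x List.mem_cons_self, rfl, rfl⟩
    exact ((ih fun y hy => h y (List.mem_cons_of_mem _ hy)).cons x).tail hx

theorem permutoLe_of_isInversion_le (hperm : σ.Perm ν) (hν : ν.Nodup)
    (hle : IsInversion σ ≤ IsInversion ν) : PermutoLe σ ν := by
  induction ν generalizing σ with
  | nil => rw [hperm.eq_nil]; exact .refl
  | cons b ν ih =>
    obtain ⟨p, q, rfl⟩ := List.append_of_mem (hperm.mem_iff.2 List.mem_cons_self)
    have hpq : (p ++ q).Perm ν := (List.perm_middle.symm.trans hperm).cons_inv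
    obtain ⟨hbν, hν⟩ := List.nodup_cons.1 hν
    have hb : b ∉ p ++ q := fun hb => hbν (hpq.mem_iff.1 hb)
    refine (permutoLe_middle q fun x hx => ?_).trans ((ih hpq hν fun x y hxy => ?_).cons b)
    · by_contra hbx
      have hxb : x ≠ b := fun h => hb (h ▸ List.mem_append_left q hx)
      have hinv := (hle b x ⟨by omega, pair_sublist_append_iff.2 (.inr (.inr ⟨hx, by simp⟩))⟩).2
      exact hbν (mem_of_pair_sublist ((pair_sublist_cons_iff.1 hinv).resolve_left (by tauto))).2
    · have hyb : y ≠ b := fun h => hb (h ▸ (mem_of_pair_sublist hxy.2).1)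
      have hinv := (hle x y ⟨hxy.1, hxy.2.trans (List.sublist_cons_self b q |>.append_left p)⟩).2
      exact ⟨hxy.1, (pair_sublist_cons_iff.1 hinv).resolve_left (by tauto)⟩

end Permutohedron

theorem exists_perm_isInversion_eq {α : Type*} [LinearOrder α] {I : α → α → Prop}
    (hlt : ∀ a b, I a b → a < b) (htrans : ∀ a b c, I a b → I b c → I a c)
    (hcotrans : ∀ a b c, a < b → b < c → I a c → I a b ∨ I b c) (l : List α)
    (hl : ∀ a b, I a b → a ∈ l ∧ b ∈ l) : ∃ σ, σ.Perm l ∧ IsInversion σ = I := by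
  -- `σ` sorts `l` by the linear order obtained from `≤` by reversing the pairs in `I`
  let r (x y : α) : Prop := (x ≤ y ∧ ¬ I x y) ∨ I y x
  have hcotrans' (a b c : α) (hab : a ≤ b) (hbc : b ≤ c) (hac : I a c) : I a b ∨ I b c := by
    rcases hab.eq_or_lt with rfl | hab
    · exact .inr hac
    rcases hbc.eq_or_lt with rfl | hbc
    exacts [.inl hac, hcotrans a b c hab hbc hac]
  have : Std.Total r := ⟨fun x y => by grind⟩
  have : IsTrans α r := ⟨fun x y z hxy hyz => by simp only [r] at *; grind⟩
  have : Std.Antisymm r := ⟨fun x y hxy hyx => by simp only [r] at *; grind⟩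
  refine ⟨l.insertionSort r, List.perm_insertionSort r l, ?_⟩
  ext a b
  constructor
  · rintro ⟨hab, hba⟩
    have hrba : r b a := by
      simpa using (List.pairwise_insertionSort r l).sublist hba
    exact hrba.resolve_left fun h => hab.not_ge h.1
  · intro hab
    refine ⟨hlt a b hab, List.pair_sublist_insertionSort' (.inr hab) ?_⟩
    have hnodup : [b, a].Nodup := by simpa using (hlt a b hab).ne'
    exact List.subperm_of_subset hnodup (by simpa using (hl a b hab).symm)

/-! ### Twin relations -/

/-- An abstraction of the pairs (left descendant relation of the first tree, right descendant
relation of the second tree) arising from pairs of twin binary trees. -/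
structure IsTwinRel {α : Type*} [Preorder α] (L R : α → α → Prop) : Prop where
  lt_of_left {a b : α} : L a b → a < b
  lt_of_right {a b : α} : R a b → a < b
  left_of_mem_Ico {a b c : α} : L a b → c ∈ Set.Ico a b → L c b
  right_of_mem_Ioc {a b c : α} : R a b → c ∈ Set.Ioc a b → R a c
  left_trans {a b c : α} : L a b → L b c → L a c
  right_trans {a b c : α} : R a b → R b c → R a c
  left_iff_right_of_covBy {a b : α} : a ⋖ b → (L a b ↔ R a b)

theorem isTwin_iff_isTwinRel {J : UBT × UBT} : IsTwin J ↔
    sizeU J.1 = sizeU J.2 ∧ IsTwinRel (J.1.LeftDesc 1) (J.2.RightDesc 1) := by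
  rw [isTwin_iff_leftDesc_iff_rightDesc]
  refine and_congr_right fun _ => ⟨fun h => ?_, fun h i => ?_⟩
  · exact {
      lt_of_left := And.left
      lt_of_right := And.left
      left_of_mem_Ico := UBT.LeftDesc.of_mem_Ico
      right_of_mem_Ioc := UBT.RightDesc.of_mem_Ioc
      left_trans := UBT.LeftDesc.trans
      right_trans := UBT.RightDesc.trans
      left_iff_right_of_covBy := fun hab => Nat.covBy_iff_add_one_eq.1 hab ▸ h _ }
  · exact h.left_iff_right_of_covBy (Nat.covBy_iff_add_one_eq.2 rfl)

/-- Intersecting with the order relation of `s` takes care of the empty family. -/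
theorem isTwinRel_forall {α ι : Type*} [Preorder α] {L R : ι → α → α → Prop}
    (h : ∀ i, IsTwinRel (L i) (R i)) (s : Set α) [s.OrdConnected] :
    IsTwinRel (fun a b => (a < b ∧ a ∈ s ∧ b ∈ s) ∧ ∀ i, L i a b)
      (fun a b => (a < b ∧ a ∈ s ∧ b ∈ s) ∧ ∀ i, R i a b) where
  lt_of_left hab := hab.1.1
  lt_of_right hab := hab.1.1
  left_of_mem_Ico := fun ⟨⟨_, ha, hb⟩, hab⟩ hc =>
    ⟨⟨hc.2, ‹s.OrdConnected›.out ha hb ⟨hc.1, hc.2.le⟩, hb⟩,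
      fun i => (h i).left_of_mem_Ico (hab i) hc⟩
  right_of_mem_Ioc := fun ⟨⟨_, ha, hb⟩, hab⟩ hc =>
    ⟨⟨hc.1, ha, ‹s.OrdConnected›.out ha hb ⟨hc.1.le, hc.2⟩⟩,
      fun i => (h i).right_of_mem_Ioc (hab i) hc⟩
  left_trans hab hbc :=
    ⟨⟨hab.1.1.trans hbc.1.1, hab.1.2.1, hbc.1.2.2⟩, fun i => (h i).left_trans (hab.2 i) (hbc.2 i)⟩
  right_trans hab hbc :=
    ⟨⟨hab.1.1.trans hbc.1.1, hab.1.2.1, hbc.1.2.2⟩, fun i => (h i).right_trans (hab.2 i) (hbc.2 i)⟩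
  left_iff_right_of_covBy hab :=
    and_congr_right fun _ => forall_congr' fun i => (h i).left_iff_right_of_covBy hab

namespace IsTwinRel

open Relation OrderDual

variable {α : Type*} [LinearOrder α] {L R : α → α → Prop} {a b c : α}

theorem dual (h : IsTwinRel L R) : IsTwinRel (fun a b : αᵒᵈ => R (ofDual b) (ofDual a))
    (fun a b : αᵒᵈ => L (ofDual b) (ofDual a)) where
  lt_of_left hab := h.lt_of_right hab
  lt_of_right hab := h.lt_of_left hab
  left_of_mem_Ico hab hc := h.right_of_mem_Ioc hab hc.symm
  right_of_mem_Ioc hab hc := h.left_of_mem_Ico hab hc.symm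
  left_trans hab hbc := h.right_trans hbc hab
  right_trans hab hbc := h.left_trans hbc hab
  left_iff_right_of_covBy hab := (h.left_iff_right_of_covBy hab.ofDual).symm

theorem lt_of_transGen (h : IsTwinRel L R) (hab : TransGen (L ⊔ R) a b) : a < b := by
  induction hab with
  | single hab => exact hab.elim h.lt_of_left h.lt_of_right
  | tail _ hbc ih => exact ih.trans (hbc.elim h.lt_of_left h.lt_of_right)

theorem transGen_cotrans (h : IsTwinRel L R) (hac : TransGen (L ⊔ R) a c) (hab : a < b)
    (hbc : b < c) : TransGen (L ⊔ R) a b ∨ TransGen (L ⊔ R) b c := by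
  have hsplit {x y : α} (hxy : (L ⊔ R) x y) (hxb : x < b) (hby : b < y) :
      (L ⊔ R) x b ∨ (L ⊔ R) b y := by
    rcases hxy with hL | hR
    · exact .inr (.inl (h.left_of_mem_Ico hL ⟨hxb.le, hby⟩))
    · exact .inl (.inr (h.right_of_mem_Ioc hR ⟨hxb, hby.le⟩))
  induction hac with
  | single hac => exact (hsplit hac hab hbc).imp .single .single
  | @tail y z hay hyz ih =>
    rcases lt_trichotomy b y with hby | rfl | hyb
    · exact (ih hby).imp_right (·.tail hyz)
    · exact .inl hay
    · exact (hsplit hyz hyb hbc).imp hay.tail .single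

theorem leftKernel_transGen [LocallyFiniteOrder α] (h : IsTwinRel L R) :
    leftKernel (TransGen (L ⊔ R)) = L := by
  ext a b
  refine ⟨fun ⟨hab, hker⟩ => ?_, fun hab => ⟨h.lt_of_left hab, fun j hj =>
    .single (.inl (h.left_of_mem_Ico hab hj))⟩⟩
  by_contra hnot
  obtain ⟨m, hm, hmax⟩ := ({x ∈ Finset.Ico a b | ¬ L x b}).exists_maximal
    ⟨a, by simpa using ⟨hab, hnot⟩⟩
  simp only [Finset.mem_filter, Finset.mem_Ico] at hm hmax
  obtain ⟨y, hmy, hyb⟩ := TransGen.head'_iff.1 (hker m hm.1)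
  have hyb : y ≤ b := by
    rcases reflTransGen_iff_eq_or_transGen.1 hyb with rfl | hyb
    exacts [le_rfl, (h.lt_of_transGen hyb).le]
  obtain ⟨c, hmc, hcb⟩ : ∃ c, L m c ∧ c ≤ b := by
    rcases hmy with hmy | hmy
    · exact ⟨y, hmy, hyb⟩
    · obtain ⟨c, hmc, hcy⟩ := exists_covBy_le_of_lt (h.lt_of_right hmy)
      have hRmc := h.right_of_mem_Ioc hmy ⟨hmc.lt, hcy⟩
      exact ⟨c, (h.left_iff_right_of_covBy hmc).2 hRmc, hcy.trans hyb⟩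
  have hlt := h.lt_of_left hmc
  obtain rfl | hcb := hcb.eq_or_lt
  · exact hm.2 hmc
  · have hLcb : L c b := by
      by_contra hLcb
      exact hlt.not_ge (hmax ⟨⟨hm.1.1.trans hlt.le, hcb⟩, hLcb⟩ hlt.le)
    exact hm.2 (h.left_trans hmc hLcb)

theorem rightKernel_transGen [LocallyFiniteOrder α] (h : IsTwinRel L R) :
    rightKernel (TransGen (L ⊔ R)) = R := by
  ext a b
  have hswap (x y : α) : TransGen (L ⊔ R) x y ↔
      TransGen ((fun a b : αᵒᵈ => R (ofDual b) (ofDual a)) ⊔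
        fun a b : αᵒᵈ => L (ofDual b) (ofDual a)) (toDual y) (toDual x) := by
    rw [sup_comm, ← transGen_swap]
    rfl
  have hdual := congrFun₂ h.dual.leftKernel_transGen (toDual b) (toDual a)
  refine Iff.trans ?_ (iff_of_eq hdual)
  exact and_congr_right fun _ => forall_congr' fun j => imp_congr and_comm (hswap a j)

theorem exists_isPerm_isInversion_eq {L R : ℕ → ℕ → Prop} {n : ℕ} (h : IsTwinRel L R)
    (hn : ∀ a b, (L ⊔ R) a b → a ∈ Set.Icc 1 n ∧ b ∈ Set.Icc 1 n) :
    ∃ σ, IsPerm n σ ∧ IsInversion σ = TransGen (L ⊔ R) := by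
  refine exists_perm_isInversion_eq (fun a b => h.lt_of_transGen) (fun a b c => .trans)
    (fun a b c hab hbc hac => h.transGen_cotrans hac hab hbc) (List.range' 1 n) fun a b hab => ?_
  obtain ⟨x, hax, -⟩ := TransGen.head'_iff.1 hab
  obtain ⟨y, -, hyb⟩ := TransGen.tail'_iff.1 hab
  have ha := (hn a x hax).1
  have hb := (hn y b hyb).2
  rw [Set.mem_Icc] at ha hb
  rw [List.mem_range'_1, List.mem_range'_1]
  omega

end IsTwinRel

/-! ### The lattice of pairs of twin binary trees -/

/-- The pair formed by the left descendant relation of the first tree and the right descendant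
relation of the second tree. -/
def descPair (J : UBT × UBT) : (ℕ → ℕ → Prop) × (ℕ → ℕ → Prop) :=
  (J.1.LeftDesc 1, J.2.RightDesc 1)

theorem eq_of_descPair_eq {J K : UBT × UBT} (h₁ : sizeU J.1 = sizeU K.1)
    (h₂ : sizeU J.2 = sizeU K.2) (h : descPair J = descPair K) : J = K := by
  rw [descPair, descPair, Prod.mk.injEq] at h
  exact Prod.ext (UBT.eq_of_leftDesc_eq h₁ h.1) (UBT.eq_of_rightDesc_eq h₂ h.2)

theorem descPair_Pshape {n : ℕ} {σ : List ℕ} (hσ : IsPerm n σ) :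
    descPair (Pshape σ) = (leftKernel (IsInversion σ), rightKernel (IsInversion σ)) :=
  Prod.ext (leftDesc_shape_insL hσ) (rightDesc_shape_insR hσ)

theorem sizeU_Pshape {n : ℕ} {σ : List ℕ} (hσ : IsPerm n σ) :
    sizeU (Pshape σ).1 = n ∧ sizeU (Pshape σ).2 = n := by
  have hlen : σ.length = n := by rw [hσ.length_eq, List.length_range']
  exact ⟨(sizeU_shape_insL σ).trans hlen,
    (sizeU_shape_insR (hσ.nodup_iff.2 List.nodup_range')).trans hlen⟩

/-- Pairs of twin binary trees with `n` nodes. -/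
def TwinTrees (n : ℕ) : Type := {J : UBT × UBT // IsTwin J ∧ sizeU J.1 = n}

namespace TwinTrees

open Relation

variable {n : ℕ}

theorem sizeU_snd (J : TwinTrees n) : sizeU J.1.2 = n :=
  J.2.1.1.symm.trans J.2.2

theorem isTwinRel (J : TwinTrees n) : IsTwinRel (descPair J.1).1 (descPair J.1).2 :=
  (isTwin_iff_isTwinRel.1 J.2.1).2

theorem mem_Icc_of_descPair (J : TwinTrees n) {a b : ℕ}
    (hab : ((descPair J.1).1 ⊔ (descPair J.1).2) a b) : a ∈ Set.Icc 1 n ∧ b ∈ Set.Icc 1 n := by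
  have h₁ := J.2.2
  have h₂ := J.sizeU_snd
  simp only [Set.mem_Icc]
  rcases hab with hab | hab <;> have := hab.2.bounds <;> omega

theorem exists_isPerm_Pshape_eq (J : TwinTrees n) : ∃ σ, IsPerm n σ ∧ Pshape σ = J.1 ∧
    IsInversion σ = TransGen ((descPair J.1).1 ⊔ (descPair J.1).2) := by
  obtain ⟨σ, hσ, hinv⟩ := J.isTwinRel.exists_isPerm_isInversion_eq fun a b => J.mem_Icc_of_descPair
  refine ⟨σ, hσ, eq_of_descPair_eq ?_ ?_ ?_, hinv⟩
  · rw [(sizeU_Pshape hσ).1, J.2.2]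
  · rw [(sizeU_Pshape hσ).2, J.sizeU_snd]
  · rw [descPair_Pshape hσ, hinv, J.isTwinRel.leftKernel_transGen,
      J.isTwinRel.rightKernel_transGen]

theorem exists_descPair_eq {L R : ℕ → ℕ → Prop} (h : IsTwinRel L R)
    (hn : ∀ a b, (L ⊔ R) a b → a ∈ Set.Icc 1 n ∧ b ∈ Set.Icc 1 n) :
    ∃ J : TwinTrees n, descPair J.1 = (L, R) := by
  obtain ⟨σ, hσ, hinv⟩ := h.exists_isPerm_isInversion_eq hn
  have hdesc : descPair (Pshape σ) = (L, R) := by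
    rw [descPair_Pshape hσ, hinv, h.leftKernel_transGen, h.rightKernel_transGen]
  obtain ⟨hL, hR⟩ := Prod.mk.inj hdesc
  obtain ⟨h₁, h₂⟩ := sizeU_Pshape hσ
  exact ⟨⟨Pshape σ, isTwin_iff_isTwinRel.2 ⟨h₁.trans h₂.symm, by rwa [hL, hR]⟩, h₁⟩, hdesc⟩

/-- The inclusion order of the descendant relations, which `TwinTrees.le_iff_leB` identifies with
the Baxter order. -/
instance : PartialOrder (TwinTrees n) :=
  .lift (fun J => descPair J.1) fun J K h =>
    Subtype.ext (eq_of_descPair_eq (J.2.2.trans K.2.2.symm) (J.sizeU_snd.trans K.sizeU_snd.symm) h)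

theorem le_iff_descPair_le {J K : TwinTrees n} : J ≤ K ↔ descPair J.1 ≤ descPair K.1 :=
  Iff.rfl

theorem le_iff_leB {J K : TwinTrees n} : J ≤ K ↔ leB J.1 K.1 := by
  rw [le_iff_descPair_le]
  constructor
  · rintro ⟨hL, hR⟩
    obtain ⟨σ, hσ, hσJ, hinvσ⟩ := J.exists_isPerm_Pshape_eq
    obtain ⟨ν, hν, hνK, hinvν⟩ := K.exists_isPerm_Pshape_eq
    refine ⟨n, σ, ν, hσ, hν, hσJ, hνK, permutoLe_of_isInversion_le (hσ.trans hν.symm)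
      (hν.nodup_iff.2 List.nodup_range') ?_⟩
    rw [hinvσ, hinvν]
    exact TransGen.mono (sup_le_sup hL hR)
  · rintro ⟨m, σ, ν, hσ, hν, hσJ, hνK, hle⟩
    rw [← hσJ, ← hνK, descPair_Pshape hσ, descPair_Pshape hν]
    exact ⟨leftKernel_mono hle.isInversion_le, rightKernel_mono hle.isInversion_le⟩

theorem exists_isGLB (S : Set (TwinTrees n)) : ∃ K, IsGLB S K := by
  obtain ⟨K, hK⟩ := exists_descPair_eq (n := n)
    (isTwinRel_forall (fun J : S => J.1.isTwinRel) (Set.Icc 1 n))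
    fun a b hab => hab.elim (·.1.2) (·.1.2)
  refine ⟨K, fun J hJ => ?_, fun M hM => ?_⟩ <;> rw [le_iff_descPair_le, hK]
  · exact ⟨fun a b hab => hab.2 ⟨J, hJ⟩, fun a b hab => hab.2 ⟨J, hJ⟩⟩
  · exact ⟨
      fun a b hab => ⟨⟨M.isTwinRel.lt_of_left hab, M.mem_Icc_of_descPair (.inl hab)⟩,
        fun J => (hM J.2).1 a b hab⟩,
      fun a b hab => ⟨⟨M.isTwinRel.lt_of_right hab, M.mem_Icc_of_descPair (.inr hab)⟩,
        fun J => (hM J.2).2 a b hab⟩⟩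

noncomputable instance : CompleteLattice (TwinTrees n) :=
  letI : InfSet (TwinTrees n) := ⟨fun S => (exists_isGLB S).choose⟩
  completeLatticeOfInf (TwinTrees n) fun S => (exists_isGLB S).choose_spec

end TwinTrees

/-- `≤_B` is a partial order on the pairs of twin binary trees
with `n` nodes, and this poset is a lattice. -/
theorem baxter_lattice (n : ℕ) :
    ∃ L : Lattice {J : UBT × UBT // IsTwin J ∧ sizeU J.1 = n},
      ∀ J0 J1 : {J : UBT × UBT // IsTwin J ∧ sizeU J.1 = n},
        (letI := L; J0 ≤ J1) ↔ leB J0.1 J1.1 := by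
  exact ⟨(inferInstance : CompleteLattice (TwinTrees n)).toLattice,
    fun _ _ => TwinTrees.le_iff_leB⟩
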